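/- arXiv:2406.06734 — 2 statements merged into one kernel-verified Lean document; each statement's English description precedes it below -/
import Mathlib

section
/- Let A be an invertible n × n matrix over a field (e.g. ℝ), let N and m be positive natural numbers, and for k = 1, …, N let U_k and V_k be n × m matrices. Define the Nm × Nm block matrix M whose (k, l) block (each block of size m × m) is V_kᵀ A⁻¹ U_l + (δ_{kl}) I_m, i.e. M_{kl} = V_kᵀ A⁻¹ U_l for k ≠ l and M_{kk} = I_m + V_kᵀ A⁻¹ U_k. If M is invertible, then the matrix A + Σ_{k=1}^{N} U_k V_kᵀ is invertible and its inverse equals A⁻¹ − A⁻¹ U M⁻¹ Vᵀ A⁻¹, where U = [U_1, U_2, …, U_N] is the n × Nm matrix formed by horizontally concatenating the U_k and Vᵀ = [V_1ᵀ; V_2ᵀ; …; V_Nᵀ] is the Nm × n matrix formed by vertically stacking the V_kᵀ. -/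
open Matrix BigOperators

section Woodbury

variable {n p R : Type*} [Fintype n] [DecidableEq n] [Fintype p] [DecidableEq p] [CommRing R]

theorem isUnit_add_mul_iff {A : Matrix n n R} (hA : IsUnit A) (U : Matrix n p R)
    (V : Matrix p n R) : IsUnit (A + U * V) ↔ IsUnit (1 + V * A⁻¹ * U) := by
  rw [isUnit_iff_isUnit_det] at hA
  simp only [isUnit_iff_isUnit_det, det_add_mul _ _ hA, IsUnit.mul_iff, hA, true_and]

theorem inv_add_mul_eq_sub {A : Matrix n n R} (hA : IsUnit A) {U : Matrix n p R}
    {V : Matrix p n R} (hAUV : IsUnit (1 + V * A⁻¹ * U)) :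
    (A + U * V)⁻¹ = A⁻¹ - A⁻¹ * U * (1 + V * A⁻¹ * U)⁻¹ * V * A⁻¹ := by
  have woodbury := add_mul_mul_inv_eq_sub A U 1 V hA isUnit_one
  simp only [inv_one, Matrix.mul_one] at woodbury
  exact woodbury hAUV

end Woodbury

section ConcatCols

variable {n ι κ R : Type*}

/-- The horizontal concatenation `[U₁, U₂, …]` of a family of matrices with the same shape; the
column `(k, j)` is the `j`-th column of `U k`. The vertical stack of the `(V k)ᵀ` is
`(concatCols V)ᵀ`. -/
def concatCols (U : ι → Matrix n κ R) : Matrix n (ι × κ) R :=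
  of fun i kj => U kj.1 i kj.2

theorem concatCols_mul_transpose_concatCols [Fintype ι] [Fintype κ] [NonUnitalNonAssocSemiring R]
    {n' : Type*} (U : ι → Matrix n κ R) (V : ι → Matrix n' κ R) :
    concatCols U * (concatCols V)ᵀ = ∑ k, U k * (V k)ᵀ := by
  ext i j
  simp only [concatCols, mul_apply, Matrix.sum_apply, transpose_apply, of_apply,
    Fintype.sum_prod_type]

theorem transpose_concatCols_mul_mul_concatCols_apply {n' ι' κ' : Type*} [Fintype n] [Fintype n']
    [NonUnitalNonAssocSemiring R] (V : ι → Matrix n κ R) (B : Matrix n n' R)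
    (U : ι' → Matrix n' κ' R) (k : ι) (i : κ) (l : ι') (j : κ') :
    ((concatCols V)ᵀ * B * concatCols U) (k, i) (l, j) = ((V k)ᵀ * B * U l) i j :=
  rfl

end ConcatCols

theorem smw_general_general {n ι κ R : Type*} [Fintype n] [DecidableEq n] [Fintype ι]
    [DecidableEq ι] [Fintype κ] [DecidableEq κ] [CommRing R]
    {A : Matrix n n R} (hA : IsUnit A) (U V : ι → Matrix n κ R)
    {M : Matrix (ι × κ) (ι × κ) R}
    (hM : ∀ k l i j,
      M (k, i) (l, j) = ((V k)ᵀ * A⁻¹ * U l) i j + (if k = l ∧ i = j then 1 else 0))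
    (hMu : IsUnit M)
    {Ubig : Matrix n (ι × κ) R} (hUbig : ∀ i k j, Ubig i (k, j) = U k i j)
    {Vbig : Matrix (ι × κ) n R} (hVbig : ∀ k j i, Vbig (k, j) i = V k i j) :
    IsUnit (A + ∑ k, U k * (V k)ᵀ) ∧
      (A + ∑ k, U k * (V k)ᵀ)⁻¹ = A⁻¹ - A⁻¹ * Ubig * M⁻¹ * Vbig * A⁻¹ := by
  obtain rfl : Ubig = concatCols U := by ext i ⟨k, j⟩; exact hUbig i k j
  obtain rfl : Vbig = (concatCols V)ᵀ := by ext ⟨k, j⟩ i; exact hVbig k j i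
  obtain rfl : M = 1 + (concatCols V)ᵀ * A⁻¹ * concatCols U := by
    ext ⟨k, i⟩ ⟨l, j⟩
    rw [hM, add_comm, Matrix.add_apply, transpose_concatCols_mul_mul_concatCols_apply]
    simp only [one_apply, Prod.mk.injEq]
  rw [← concatCols_mul_transpose_concatCols]
  exact ⟨(isUnit_add_mul_iff hA _ _).mpr hMu, inv_add_mul_eq_sub hA hMu⟩

/-- Generalized Sherman–Morrison–Woodbury formula for a sum of `N` rank-`m`
corrections: if `A` is invertible and the capacitance block matrix `M` (with
`(k,l)` block `Vₖᵀ A⁻¹ Uₗ + δₖₗ Iₘ`) is invertible, then `A + ∑ Uₖ Vₖᵀ` is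
invertible with inverse `A⁻¹ − A⁻¹ U M⁻¹ Vᵀ A⁻¹`. -/
theorem smw_general (n N m : ℕ) (hN : 0 < N) (hm : 0 < m)
    (A : Matrix (Fin n) (Fin n) ℝ) (hA : IsUnit A)
    (U V : Fin N → Matrix (Fin n) (Fin m) ℝ)
    (M : Matrix (Fin N × Fin m) (Fin N × Fin m) ℝ)
    (hM : ∀ (k l : Fin N) (i j : Fin m),
      M (k, i) (l, j) = ((V k)ᵀ * A⁻¹ * U l) i j + (if k = l ∧ i = j then 1 else 0))
    (hMu : IsUnit M)
    (Ubig : Matrix (Fin n) (Fin N × Fin m) ℝ)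
    (hUbig : ∀ (i : Fin n) (k : Fin N) (j : Fin m), Ubig i (k, j) = U k i j)
    (Vbig : Matrix (Fin N × Fin m) (Fin n) ℝ)
    (hVbig : ∀ (k : Fin N) (j : Fin m) (i : Fin n), Vbig (k, j) i = V k i j) :
    IsUnit (A + ∑ k : Fin N, U k * (V k)ᵀ) ∧
      (A + ∑ k : Fin N, U k * (V k)ᵀ)⁻¹
        = A⁻¹ - A⁻¹ * Ubig * M⁻¹ * Vbig * A⁻¹ := by
  exact smw_general_general hA U V hM hMu hUbig hVbig
end

section
/- Let A be an invertible n × n real matrix, N and m positive naturals, and U_k, V_k (k = 1, …, N) n × m real matrices. If the matrix A + Σ_{k=1}^{N} U_k V_kᵀ is invertible, then the Nm × Nm block matrix M with (k, l) block equal to V_kᵀ A⁻¹ U_l + (δ_{kl}) I_m is invertible. -/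
open Matrix BigOperators

section Capacitance

variable {R ι κ μ : Type*}

/-- The row block matrix `[U₁ ⋯ U_N]`, with the columns of the blocks indexed by pairs
(block, column inside the block). It turns `∑ Uₖ Vₖᵀ` into a single product. -/
def blockRow (U : κ → Matrix ι μ R) : Matrix ι (κ × μ) R :=
  Matrix.of fun a p => U p.1 a p.2

theorem blockRow_mul_transpose_blockRow [NonUnitalNonAssocSemiring R] [Fintype κ] [Fintype μ]
    {ι' : Type*} (U : κ → Matrix ι μ R) (V : κ → Matrix ι' μ R) :
    blockRow U * (blockRow V)ᵀ = ∑ k, U k * (V k)ᵀ := by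
  ext a b
  simp [blockRow, Matrix.mul_apply, Matrix.sum_apply, Fintype.sum_prod_type]

theorem transpose_blockRow_mul_mul_blockRow_apply [NonUnitalNonAssocSemiring R] [Fintype ι]
    {ι' κ' μ' : Type*} [Fintype ι']
    (V : κ → Matrix ι μ R) (B : Matrix ι ι' R) (U : κ' → Matrix ι' μ' R)
    (k : κ) (l : κ') (i : μ) (j : μ') :
    ((blockRow V)ᵀ * B * blockRow U) (k, i) (l, j) = ((V k)ᵀ * B * U l) i j :=
  rfl

theorem isUnit_add_mul_iff_isUnit_one_add_mul_inv_mul [CommRing R] [Fintype ι]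
    [DecidableEq ι] [Fintype κ] [DecidableEq κ] {A : Matrix ι ι R} (hA : IsUnit A)
    (P : Matrix ι κ R) (Q : Matrix κ ι R) :
    IsUnit (A + P * Q) ↔ IsUnit (1 + Q * A⁻¹ * P) := by
  have hdet : IsUnit A.det := (Matrix.isUnit_iff_isUnit_det A).mp hA
  rw [Matrix.isUnit_iff_isUnit_det, Matrix.isUnit_iff_isUnit_det, Matrix.det_add_mul P Q hdet,
    IsUnit.mul_iff, and_iff_right hdet]

theorem smw_capacitance_invertible_general [CommRing R] [Fintype ι] [DecidableEq ι]
    [Fintype κ] [DecidableEq κ] [Fintype μ] [DecidableEq μ] {A : Matrix ι ι R} (hA : IsUnit A)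
    (U V : κ → Matrix ι μ R) {M : Matrix (κ × μ) (κ × μ) R}
    (hM : ∀ (k l : κ) (i j : μ),
      M (k, i) (l, j) = ((V k)ᵀ * A⁻¹ * U l) i j + (if k = l ∧ i = j then 1 else 0)) :
    IsUnit (A + ∑ k, U k * (V k)ᵀ) ↔ IsUnit M := by
  have hM_eq : M = 1 + (blockRow V)ᵀ * A⁻¹ * blockRow U := by
    ext ⟨k, i⟩ ⟨l, j⟩
    rw [hM, add_comm, Matrix.add_apply, transpose_blockRow_mul_mul_blockRow_apply]
    simp only [Matrix.one_apply, Prod.mk.injEq]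
  rw [hM_eq, ← blockRow_mul_transpose_blockRow]
  exact isUnit_add_mul_iff_isUnit_one_add_mul_inv_mul hA _ _

end Capacitance

/-- Converse invertibility direction of the generalized Sherman–Morrison–Woodbury
formula: for `A` invertible, invertibility of `A + ∑ Uₖ Vₖᵀ` forces invertibility
of the capacitance block matrix `M` with `(k,l)` block `Vₖᵀ A⁻¹ Uₗ + δₖₗ Iₘ`. -/
theorem smw_capacitance_invertible (n N m : ℕ) (hN : 0 < N) (hm : 0 < m)
    (A : Matrix (Fin n) (Fin n) ℝ) (hA : IsUnit A)
    (U V : Fin N → Matrix (Fin n) (Fin m) ℝ)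
    (M : Matrix (Fin N × Fin m) (Fin N × Fin m) ℝ)
    (hM : ∀ (k l : Fin N) (i j : Fin m),
      M (k, i) (l, j) = ((V k)ᵀ * A⁻¹ * U l) i j + (if k = l ∧ i = j then 1 else 0))
    (hSum : IsUnit (A + ∑ k : Fin N, U k * (V k)ᵀ)) :
    IsUnit M :=
  (smw_capacitance_invertible_general hA U V hM).mp hSum
end
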